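/- arXiv:2308.11731 — 6 statements merged into one kernel-verified Lean document; each statement's English description precedes it below -/
import Mathlib

section
/- Let K be a differential field and L a differential K-algebra. Suppose that L admits a finite K-Taylor morphism T̂. Then L admits a unique restricted K-Taylor morphism T̃ whose restriction to differentially finitely generated differential K-algebras is T̂. -/
/-!
Every differential `K`-algebra `A` is the directed union of the differential `K`-subalgebras
`K{S}` generated by finite subsets `S ⊆ A` (`fgSub`), each of which is differentially finitely
generated (`isDFG_fgSub`). Given `φ : A → K`, restrict it to `K{S}` and apply the finite Taylor
morphism. By (TM2) for `K{S} → K{S'}` with `S ⊆ S'` these values glue, so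
`a ↦ T̂_{φ|K{a}}(a)` is a differential `K`-algebra homomorphism (`extendHom`).
The same naturality, for the maps `K{S} → K{S'}` induced by any differential `K`-algebra
homomorphism `χ : A → B` with `χ(S) ⊆ S'`, gives (TM2) (`finVal_eq`). The extension agrees with
`T̂` on differentially finitely generated algebras by (TM2) for the inclusion `K{a} → A`, and that
same inclusion forces the value at `a` of any other extension, hence uniqueness.
-/


universe u

/-- A family of `m` pairwise commuting derivations on a commutative ring,
making it a differential ring. -/
structure DiffStruct (m : ℕ) (A : Type u) [CommRing A] : Type u where
  d : Fin m → A → A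
  d_add : ∀ (i : Fin m) (x y : A), d i (x + y) = d i x + d i y
  d_mul : ∀ (i : Fin m) (x y : A), d i (x * y) = d i x * y + x * d i y
  d_comm : ∀ (i j : Fin m) (x : A), d i (d j x) = d j (d i x)

/-- A ring homomorphism is differential if it commutes with the derivations. -/
def IsDiffHom {m : ℕ} {A B : Type u} [CommRing A] [CommRing B]
    (dA : DiffStruct m A) (dB : DiffStruct m B) (φ : A →+* B) : Prop :=
  ∀ (i : Fin m) (x : A), φ (dA.d i x) = dB.d i (φ x)

/-- A `K`-Taylor morphism for a differential `K`-algebra `(L, dL, ηL)`: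
an assignment sending each differential ring `A` with a ring homomorphism
`φ : A → K` to a differential ring homomorphism `T_φ : A → L`, satisfying
(TM1) and (TM2). -/
structure TaylorMorphism (m : ℕ) (K : Type u) [CommRing K] (dK : DiffStruct m K)
    (L : Type u) [CommRing L] (dL : DiffStruct m L) (ηL : K →+* L) :
    Type (u + 1) where
  T : ∀ (A : Type u) [CommRing A], DiffStruct m A → (A →+* K) → (A →+* L)
  T_diff : ∀ (A : Type u) [CommRing A] (dA : DiffStruct m A) (φ : A →+* K),
    IsDiffHom dA dL (T A dA φ)
  tm1 : ∀ (A : Type u) [CommRing A] (dA : DiffStruct m A) (φ : A →+* K),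
    IsDiffHom dA dK φ → T A dA φ = ηL.comp φ
  tm2 : ∀ (A B : Type u) [CommRing A] [CommRing B]
    (dA : DiffStruct m A) (dB : DiffStruct m B)
    (φ : A →+* K) (ψ : B →+* K) (χ : A →+* B),
    IsDiffHom dA dB χ → φ = ψ.comp χ → T A dA φ = (T B dB ψ).comp χ

/-- Iterated application of the derivations: `(δ^A)^α` for a multi-index `α ∈ ℕ^m`. -/
def DiffStruct.dpow {m : ℕ} {A : Type u} [CommRing A] (dA : DiffStruct m A)
    (α : Fin m → ℕ) (a : A) : A :=
  (List.finRange m).foldl (fun x i => (dA.d i)^[α i] x) a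

/-- A differential `K`-algebra `(A, dA, ηA)` is differentially finitely generated if
it is generated as a ring by the image of `K` together with all iterated derivatives
of a finite set. -/
def IsDFG {m : ℕ} {K A : Type u} [CommRing K] [CommRing A]
    (dA : DiffStruct m A) (ηA : K →+* A) : Prop :=
  ∃ S : Finset A, Subring.closure
    (Set.range ηA ∪ {x | ∃ s ∈ S, ∃ α : Fin m → ℕ, x = dA.dpow α s}) = ⊤

/-- A restricted `K`-Taylor morphism for `L`: an assignment defined on pairs `(A, φ)`
with `A` a differential `K`-algebra and `φ : A → K` a `K`-algebra homomorphism,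
taking values in differential `K`-algebra homomorphisms `A → L` and satisfying
(TM1) and (TM2) restricted to differential `K`-algebras and `K`-algebra
homomorphisms. -/
structure RestrictedTaylorMorphism (m : ℕ) (K : Type u) [CommRing K]
    (dK : DiffStruct m K) (L : Type u) [CommRing L] (dL : DiffStruct m L)
    (ηL : K →+* L) : Type (u + 1) where
  T : ∀ (A : Type u) [CommRing A] (dA : DiffStruct m A) (ηA : K →+* A),
      IsDiffHom dK dA ηA → ∀ (φ : A →+* K), φ.comp ηA = RingHom.id K → (A →+* L)
  T_diff : ∀ (A : Type u) [CommRing A] (dA : DiffStruct m A) (ηA : K →+* A)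
      (hηA : IsDiffHom dK dA ηA) (φ : A →+* K) (hφ : φ.comp ηA = RingHom.id K),
      IsDiffHom dA dL (T A dA ηA hηA φ hφ)
  T_alg : ∀ (A : Type u) [CommRing A] (dA : DiffStruct m A) (ηA : K →+* A)
      (hηA : IsDiffHom dK dA ηA) (φ : A →+* K) (hφ : φ.comp ηA = RingHom.id K),
      (T A dA ηA hηA φ hφ).comp ηA = ηL
  tm1 : ∀ (A : Type u) [CommRing A] (dA : DiffStruct m A) (ηA : K →+* A)
      (hηA : IsDiffHom dK dA ηA) (φ : A →+* K) (hφ : φ.comp ηA = RingHom.id K),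
      IsDiffHom dA dK φ → T A dA ηA hηA φ hφ = ηL.comp φ
  tm2 : ∀ (A B : Type u) [CommRing A] [CommRing B]
      (dA : DiffStruct m A) (dB : DiffStruct m B) (ηA : K →+* A) (ηB : K →+* B)
      (hηA : IsDiffHom dK dA ηA) (hηB : IsDiffHom dK dB ηB)
      (φ : A →+* K) (ψ : B →+* K)
      (hφ : φ.comp ηA = RingHom.id K) (hψ : ψ.comp ηB = RingHom.id K)
      (χ : A →+* B), IsDiffHom dA dB χ → χ.comp ηA = ηB → φ = ψ.comp χ →
      T A dA ηA hηA φ hφ = (T B dB ηB hηB ψ hψ).comp χ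

/-- A finite `K`-Taylor morphism for `L`: an assignment as in a restricted `K`-Taylor
morphism, but defined only on differentially finitely generated differential
`K`-algebras. -/
structure FiniteTaylorMorphism (m : ℕ) (K : Type u) [CommRing K]
    (dK : DiffStruct m K) (L : Type u) [CommRing L] (dL : DiffStruct m L)
    (ηL : K →+* L) : Type (u + 1) where
  T : ∀ (A : Type u) [CommRing A] (dA : DiffStruct m A) (ηA : K →+* A),
      IsDiffHom dK dA ηA → IsDFG dA ηA →
      ∀ (φ : A →+* K), φ.comp ηA = RingHom.id K → (A →+* L)
  T_diff : ∀ (A : Type u) [CommRing A] (dA : DiffStruct m A) (ηA : K →+* A)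
      (hηA : IsDiffHom dK dA ηA) (hfg : IsDFG dA ηA)
      (φ : A →+* K) (hφ : φ.comp ηA = RingHom.id K),
      IsDiffHom dA dL (T A dA ηA hηA hfg φ hφ)
  T_alg : ∀ (A : Type u) [CommRing A] (dA : DiffStruct m A) (ηA : K →+* A)
      (hηA : IsDiffHom dK dA ηA) (hfg : IsDFG dA ηA)
      (φ : A →+* K) (hφ : φ.comp ηA = RingHom.id K),
      (T A dA ηA hηA hfg φ hφ).comp ηA = ηL
  tm1 : ∀ (A : Type u) [CommRing A] (dA : DiffStruct m A) (ηA : K →+* A)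
      (hηA : IsDiffHom dK dA ηA) (hfg : IsDFG dA ηA)
      (φ : A →+* K) (hφ : φ.comp ηA = RingHom.id K),
      IsDiffHom dA dK φ → T A dA ηA hηA hfg φ hφ = ηL.comp φ
  tm2 : ∀ (A B : Type u) [CommRing A] [CommRing B]
      (dA : DiffStruct m A) (dB : DiffStruct m B) (ηA : K →+* A) (ηB : K →+* B)
      (hηA : IsDiffHom dK dA ηA) (hηB : IsDiffHom dK dB ηB)
      (hfgA : IsDFG dA ηA) (hfgB : IsDFG dB ηB)
      (φ : A →+* K) (ψ : B →+* K)
      (hφ : φ.comp ηA = RingHom.id K) (hψ : ψ.comp ηB = RingHom.id K)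
      (χ : A →+* B), IsDiffHom dA dB χ → χ.comp ηA = ηB → φ = ψ.comp χ →
      T A dA ηA hηA hfgA φ hφ = (T B dB ηB hηB hfgB ψ hψ).comp χ

section DiffAlgebra

variable {m : ℕ} {K A B : Type u} [CommRing K] [CommRing A] [CommRing B]

theorem DiffStruct.d_zero (dA : DiffStruct m A) (i : Fin m) : dA.d i 0 = 0 := by
  have h := dA.d_add i 0 0
  simpa using h

theorem DiffStruct.d_one (dA : DiffStruct m A) (i : Fin m) : dA.d i 1 = 0 := by
  have h := dA.d_mul i 1 1
  simpa using h

theorem DiffStruct.d_neg (dA : DiffStruct m A) (i : Fin m) (x : A) :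
    dA.d i (-x) = -dA.d i x := by
  have h := dA.d_add i (-x) x
  rw [neg_add_cancel, dA.d_zero] at h
  exact eq_neg_of_add_eq_zero_left h.symm

theorem DiffStruct.d_foldl (dA : DiffStruct m A) (i : Fin m) (α : Fin m → ℕ)
    (l : List (Fin m)) (x : A) :
    dA.d i (l.foldl (fun x j => (dA.d j)^[α j] x) x) =
      l.foldl (fun x j => (dA.d j)^[α j] x) (dA.d i x) := by
  induction l generalizing x with
  | nil => rfl
  | cons j l ih =>
    have hc : Function.Commute (dA.d i) (dA.d j) := dA.d_comm i j
    simp only [List.foldl_cons]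
    rw [ih, hc.iterate_right (α j) x]

/-- In a duplicate-free list containing `i`, raising the exponent at `i` by one amounts to
differentiating the argument once more. -/
theorem DiffStruct.foldl_update (dA : DiffStruct m A) (i : Fin m) (α : Fin m → ℕ)
    (l : List (Fin m)) (hl : l.Nodup) (hi : i ∈ l) (x : A) :
    l.foldl (fun x j => (dA.d j)^[Function.update α i (α i + 1) j] x) x =
      l.foldl (fun x j => (dA.d j)^[α j] x) (dA.d i x) := by
  induction l generalizing x with
  | nil => simp at hi
  | cons j l ih =>
    rw [List.nodup_cons] at hl
    simp only [List.foldl_cons]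
    by_cases hij : i = j
    · subst hij
      rw [Function.update_self, Function.iterate_succ_apply]
      refine List.foldl_ext _ _ _ fun y k hk => ?_
      have hki : k ≠ i := fun h => hl.1 (h ▸ hk)
      rw [Function.update_of_ne hki]
    · have hc : Function.Commute (dA.d i) (dA.d j) := dA.d_comm i j
      rw [ih hl.2 ((List.mem_cons.1 hi).resolve_left hij),
        Function.update_of_ne (Ne.symm hij), hc.iterate_right (α j) x]

theorem DiffStruct.d_dpow (dA : DiffStruct m A) (i : Fin m) (α : Fin m → ℕ) (x : A) :
    dA.d i (dA.dpow α x) = dA.dpow (Function.update α i (α i + 1)) x := by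
  unfold DiffStruct.dpow
  rw [dA.d_foldl, dA.foldl_update i α _ (List.nodup_finRange m) (List.mem_finRange i)]

theorem DiffStruct.dpow_zero (dA : DiffStruct m A) (x : A) : dA.dpow 0 x = x := by
  unfold DiffStruct.dpow
  generalize List.finRange m = l
  induction l with
  | nil => rfl
  | cons j l ih => exact ih

theorem IsDiffHom.map_dpow {dA : DiffStruct m A} {dB : DiffStruct m B} {χ : A →+* B}
    (hχ : IsDiffHom dA dB χ) (α : Fin m → ℕ) (x : A) :
    χ (dA.dpow α x) = dB.dpow α (χ x) := by
  unfold DiffStruct.dpow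
  generalize List.finRange m = l
  induction l generalizing x with
  | nil => rfl
  | cons j l ih =>
    have hs : Function.Semiconj χ (dA.d j) (dB.d j) := hχ j
    simp only [List.foldl_cons]
    rw [ih, hs.iterate_right (α j) x]

/-- The differential `K`-subalgebra `K{S}` of `A` generated by a finite set `S`. -/
def fgSub (dA : DiffStruct m A) (ηA : K →+* A) (S : Finset A) : Subring A :=
  Subring.closure (Set.range ηA ∪ {x | ∃ s ∈ S, ∃ α : Fin m → ℕ, x = dA.dpow α s})

theorem alg_mem_fgSub (dA : DiffStruct m A) (ηA : K →+* A) (S : Finset A) (k : K) :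
    ηA k ∈ fgSub dA ηA S :=
  Subring.subset_closure (Or.inl ⟨k, rfl⟩)

theorem dpow_mem_fgSub (dA : DiffStruct m A) (ηA : K →+* A) {S : Finset A} {s : A}
    (hs : s ∈ S) (α : Fin m → ℕ) : dA.dpow α s ∈ fgSub dA ηA S :=
  Subring.subset_closure (Or.inr ⟨s, hs, α, rfl⟩)

theorem mem_fgSub (dA : DiffStruct m A) (ηA : K →+* A) {S : Finset A} {s : A}
    (hs : s ∈ S) : s ∈ fgSub dA ηA S := by
  simpa only [dA.dpow_zero] using dpow_mem_fgSub dA ηA hs 0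

theorem d_mem_fgSub {dK : DiffStruct m K} {dA : DiffStruct m A} {ηA : K →+* A}
    (hηA : IsDiffHom dK dA ηA) (S : Finset A) (i : Fin m) {x : A}
    (hx : x ∈ fgSub dA ηA S) : dA.d i x ∈ fgSub dA ηA S := by
  induction hx using Subring.closure_induction with
  | mem x hx =>
    rcases hx with ⟨k, rfl⟩ | ⟨s, hs, α, rfl⟩
    · rw [← hηA i k]
      exact alg_mem_fgSub dA ηA S _
    · rw [dA.d_dpow]
      exact dpow_mem_fgSub dA ηA hs _
  | zero => rw [dA.d_zero]; exact zero_mem _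
  | one => rw [dA.d_one]; exact zero_mem _
  | add x y _ _ ihx ihy => rw [dA.d_add]; exact add_mem ihx ihy
  | neg x _ ih => rw [dA.d_neg]; exact neg_mem ih
  | mul x y hx hy ihx ihy =>
    rw [dA.d_mul]
    exact add_mem (mul_mem ihx hy) (mul_mem hx ihy)

/-- The derivations of `A` restricted to `K{S}`. -/
def fgDiff {dK : DiffStruct m K} {dA : DiffStruct m A} {ηA : K →+* A}
    (hηA : IsDiffHom dK dA ηA) (S : Finset A) : DiffStruct m (fgSub dA ηA S) where
  d i x := ⟨dA.d i x, d_mem_fgSub hηA S i x.2⟩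
  d_add i x y := Subtype.ext (dA.d_add i x y)
  d_mul i x y := Subtype.ext (dA.d_mul i x y)
  d_comm i j x := Subtype.ext (dA.d_comm i j x)

/-- The structure map `K → K{S}`. -/
def fgAlg (dA : DiffStruct m A) (ηA : K →+* A) (S : Finset A) : K →+* fgSub dA ηA S :=
  ηA.codRestrict _ (alg_mem_fgSub dA ηA S)

theorem isDiffHom_fgAlg {dK : DiffStruct m K} {dA : DiffStruct m A} {ηA : K →+* A}
    (hηA : IsDiffHom dK dA ηA) (S : Finset A) :
    IsDiffHom dK (fgDiff hηA S) (fgAlg dA ηA S) :=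
  fun i k => Subtype.ext (hηA i k)

theorem isDiffHom_subtype {dK : DiffStruct m K} {dA : DiffStruct m A} {ηA : K →+* A}
    (hηA : IsDiffHom dK dA ηA) (S : Finset A) :
    IsDiffHom (fgDiff hηA S) dA (fgSub dA ηA S).subtype :=
  fun _ _ => rfl

theorem isDFG_fgSub {dK : DiffStruct m K} {dA : DiffStruct m A} {ηA : K →+* A}
    (hηA : IsDiffHom dK dA ηA) (S : Finset A) :
    IsDFG (fgDiff hηA S) (fgAlg dA ηA S) := by
  classical
  refine ⟨S.attach.image fun s => ⟨s.1, mem_fgSub dA ηA s.2⟩, ?_⟩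
  rw [eq_top_iff]
  rintro x -
  -- The inclusion into `A` is injective, so it suffices to compare images in `A`.
  suffices h : fgSub dA ηA S ≤ Subring.map (fgSub dA ηA S).subtype (Subring.closure _) by
    obtain ⟨y, hy, hyx⟩ := h x.2
    exact Subtype.val_injective hyx ▸ hy
  rw [RingHom.map_closure]
  refine Subring.closure_mono ?_
  rintro x (⟨k, rfl⟩ | ⟨s, hs, α, rfl⟩)
  · exact ⟨fgAlg dA ηA S k, Or.inl ⟨k, rfl⟩, rfl⟩
  · refine ⟨(fgDiff hηA S).dpow α ⟨s, mem_fgSub dA ηA hs⟩, Or.inr ⟨_, ?_, α, rfl⟩, ?_⟩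
    · exact Finset.mem_image.2 ⟨⟨s, hs⟩, Finset.mem_attach _ _, rfl⟩
    · exact (isDiffHom_subtype hηA S).map_dpow α _

theorem map_mem_fgSub {dA : DiffStruct m A} {dB : DiffStruct m B} {ηA : K →+* A}
    {ηB : K →+* B} {χ : A →+* B} (hχ : IsDiffHom dA dB χ) (hχη : χ.comp ηA = ηB)
    {S : Finset A} {S' : Finset B} (hS : ∀ s ∈ S, χ s ∈ S') {x : A}
    (hx : x ∈ fgSub dA ηA S) : χ x ∈ fgSub dB ηB S' := by
  suffices h : fgSub dA ηA S ≤ (fgSub dB ηB S').comap χ from h hx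
  refine Subring.closure_le.2 ?_
  rintro x (⟨k, rfl⟩ | ⟨s, hs, α, rfl⟩)
  · change χ (ηA k) ∈ fgSub dB ηB S'
    rw [← RingHom.comp_apply, hχη]
    exact alg_mem_fgSub dB ηB S' k
  · change χ (dA.dpow α s) ∈ fgSub dB ηB S'
    rw [hχ.map_dpow]
    exact dpow_mem_fgSub dB ηB (hS s hs) α

end DiffAlgebra

section Extension

variable {m : ℕ} {K : Type u} [CommRing K] {dK : DiffStruct m K}
  {L : Type u} [CommRing L] {dL : DiffStruct m L} {ηL : K →+* L}
  {A B : Type u} [CommRing A] [CommRing B]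

theorem fg_comp {dA : DiffStruct m A} {ηA : K →+* A} {φ : A →+* K}
    (hφ : φ.comp ηA = RingHom.id K) (S : Finset A) :
    (φ.comp (fgSub dA ηA S).subtype).comp (fgAlg dA ηA S) = RingHom.id K := hφ

/-- The finite Taylor morphism of `φ` restricted to `K{S}`. -/
def finVal (That : FiniteTaylorMorphism m K dK L dL ηL) {dA : DiffStruct m A}
    {ηA : K →+* A} (hηA : IsDiffHom dK dA ηA) {φ : A →+* K}
    (hφ : φ.comp ηA = RingHom.id K) (S : Finset A) : fgSub dA ηA S →+* L :=
  That.T _ (fgDiff hηA S) (fgAlg dA ηA S) (isDiffHom_fgAlg hηA S) (isDFG_fgSub hηA S)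
    (φ.comp (fgSub dA ηA S).subtype) (fg_comp hφ S)

/-- Naturality of `finVal`: this is (TM2) for the map `K{S} → K{S'}` induced by `χ`. -/
theorem finVal_eq (That : FiniteTaylorMorphism m K dK L dL ηL)
    {dA : DiffStruct m A} {dB : DiffStruct m B} {ηA : K →+* A} {ηB : K →+* B}
    (hηA : IsDiffHom dK dA ηA) (hηB : IsDiffHom dK dB ηB) {φ : A →+* K} {ψ : B →+* K}
    (hφ : φ.comp ηA = RingHom.id K) (hψ : ψ.comp ηB = RingHom.id K) {χ : A →+* B}
    (hχ : IsDiffHom dA dB χ) (hχη : χ.comp ηA = ηB) (hφψ : φ = ψ.comp χ)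
    {S : Finset A} {S' : Finset B} (hS : ∀ s ∈ S, χ s ∈ S') (x : fgSub dA ηA S) :
    finVal That hηA hφ S x =
      finVal That hηB hψ S' ⟨χ x, map_mem_fgSub hχ hχη hS x.2⟩ := by
  let r : fgSub dA ηA S →+* fgSub dB ηB S' :=
    (χ.comp (fgSub dA ηA S).subtype).codRestrict _ fun y => map_mem_fgSub hχ hχη hS y.2
  have h := That.tm2 _ _ (fgDiff hηA S) (fgDiff hηB S') (fgAlg dA ηA S) (fgAlg dB ηB S')
    (isDiffHom_fgAlg hηA S) (isDiffHom_fgAlg hηB S') (isDFG_fgSub hηA S) (isDFG_fgSub hηB S')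
    (φ.comp (fgSub dA ηA S).subtype) (ψ.comp (fgSub dB ηB S').subtype)
    (fg_comp hφ S) (fg_comp hψ S') r
    (fun i y => Subtype.ext (hχ i y))
    (RingHom.ext fun k => Subtype.ext (RingHom.congr_fun hχη k))
    (by subst hφψ; rfl)
  exact RingHom.congr_fun h x

/-- The values of `T̂` on the algebras `K{S}` do not depend on `S`. -/
theorem finVal_singleton (That : FiniteTaylorMorphism m K dK L dL ηL)
    {dA : DiffStruct m A} {ηA : K →+* A} (hηA : IsDiffHom dK dA ηA) {φ : A →+* K}
    (hφ : φ.comp ηA = RingHom.id K) {S : Finset A} (x : fgSub dA ηA S) :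
    finVal That hηA hφ {x.1} ⟨x.1, mem_fgSub dA ηA (Finset.mem_singleton_self _)⟩ =
      finVal That hηA hφ S x := by
  classical
  have hid : IsDiffHom dA dA (RingHom.id A) := fun _ _ => rfl
  -- `x` need not belong to `S`, so both values are compared in `K{S ∪ {x}}`.
  rw [finVal_eq That hηA hηA hφ hφ hid rfl rfl (S' := insert x.1 S) (by simp),
    finVal_eq That hηA hηA hφ hφ hid rfl rfl (S' := insert x.1 S)
      (fun s hs => Finset.mem_insert_of_mem hs)]

/-- The glued homomorphism `a ↦ T̂_{φ|K{a}}(a)`. -/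
def extendHom (That : FiniteTaylorMorphism m K dK L dL ηL) {dA : DiffStruct m A}
    {ηA : K →+* A} (hηA : IsDiffHom dK dA ηA) {φ : A →+* K}
    (hφ : φ.comp ηA = RingHom.id K) : A →+* L where
  toFun a := finVal That hηA hφ {a} ⟨a, mem_fgSub dA ηA (Finset.mem_singleton_self _)⟩
  map_one' := (finVal_singleton That hηA hφ (S := ∅) 1).trans (map_one _)
  map_zero' := (finVal_singleton That hηA hφ (S := ∅) 0).trans (map_zero _)
  map_add' a b := by
    classical
    let a' : fgSub dA ηA {a, b} := ⟨a, mem_fgSub dA ηA (by simp)⟩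
    let b' : fgSub dA ηA {a, b} := ⟨b, mem_fgSub dA ηA (by simp)⟩
    exact (finVal_singleton That hηA hφ (a' + b')).trans ((map_add _ a' b').trans
      (congrArg₂ _ (finVal_singleton That hηA hφ a').symm
        (finVal_singleton That hηA hφ b').symm))
  map_mul' a b := by
    classical
    let a' : fgSub dA ηA {a, b} := ⟨a, mem_fgSub dA ηA (by simp)⟩
    let b' : fgSub dA ηA {a, b} := ⟨b, mem_fgSub dA ηA (by simp)⟩
    exact (finVal_singleton That hηA hφ (a' * b')).trans ((map_mul _ a' b').trans
      (congrArg₂ _ (finVal_singleton That hηA hφ a').symm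
        (finVal_singleton That hηA hφ b').symm))

theorem extendHom_eq (That : FiniteTaylorMorphism m K dK L dL ηL)
    {dA : DiffStruct m A} {ηA : K →+* A} (hηA : IsDiffHom dK dA ηA) {φ : A →+* K}
    (hφ : φ.comp ηA = RingHom.id K) {S : Finset A} (x : fgSub dA ηA S) :
    extendHom That hηA hφ x.1 = finVal That hηA hφ S x :=
  finVal_singleton That hηA hφ x

/-- The restricted Taylor morphism glued from a finite one. -/
def extendTaylor (That : FiniteTaylorMorphism m K dK L dL ηL) :
    RestrictedTaylorMorphism m K dK L dL ηL where
  T _ _ _ _ hηA _ hφ := extendHom That hηA hφ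
  T_diff A _ dA ηA hηA φ hφ i a := by
    let a' : fgSub dA ηA {a} := ⟨a, mem_fgSub dA ηA (Finset.mem_singleton_self _)⟩
    exact (extendHom_eq That hηA hφ ((fgDiff hηA {a}).d i a')).trans
      (That.T_diff _ (fgDiff hηA {a}) _ _ _ _ _ i a')
  T_alg A _ dA ηA hηA φ hφ := RingHom.ext fun k =>
    (extendHom_eq That hηA hφ (fgAlg dA ηA ∅ k)).trans
      (RingHom.congr_fun (That.T_alg _ (fgDiff hηA ∅) _ _ _ _ _) k)
  tm1 A _ dA ηA hηA φ hφ hd := RingHom.ext fun a =>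
    RingHom.congr_fun (That.tm1 _ (fgDiff hηA {a}) _ _ _ _ _ fun i x => hd i x) _
  tm2 A B _ _ dA dB ηA ηB hηA hηB φ ψ hφ hψ χ hχ hχη hφψ := RingHom.ext fun a =>
    finVal_eq That hηA hηB hφ hψ hχ hχη hφψ (S' := {χ a}) (by simp) _

end Extension

/-- finite Taylor morphisms extend uniquely to restricted ones.
Let `K` be a differential field and `L` a differential `K`-algebra.  If `L` admits a
finite `K`-Taylor morphism `T̂`, then `L` admits a unique restricted `K`-Taylor
morphism whose restriction to differentially finitely generated differential
`K`-algebras is `T̂`. -/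
theorem finite_taylor_morphism_extends_uniquely_to_restricted
    {m : ℕ} (K : Type u) [Field K] (dK : DiffStruct m K)
    (L : Type u) [CommRing L] (dL : DiffStruct m L) (ηL : K →+* L)
    (hηL : IsDiffHom dK dL ηL)
    (That : FiniteTaylorMorphism m K dK L dL ηL) :
    ∃! Ttil : RestrictedTaylorMorphism m K dK L dL ηL,
      ∀ (A : Type u) [CommRing A] (dA : DiffStruct m A) (ηA : K →+* A)
        (hηA : IsDiffHom dK dA ηA) (hfg : IsDFG dA ηA)
        (φ : A →+* K) (hφ : φ.comp ηA = RingHom.id K),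
        Ttil.T A dA ηA hηA φ hφ = That.T A dA ηA hηA hfg φ hφ := by
  refine ⟨extendTaylor That, ?_, ?_⟩
  · intro A _ dA ηA hηA hfg φ hφ
    ext a
    -- (TM2) for the inclusion `K{a} → A`.
    have h := That.tm2 _ A (fgDiff hηA {a}) dA (fgAlg dA ηA {a}) ηA (isDiffHom_fgAlg hηA {a})
      hηA (isDFG_fgSub hηA {a}) hfg (φ.comp (fgSub dA ηA {a}).subtype) φ (fg_comp hφ {a}) hφ
      (fgSub dA ηA {a}).subtype (isDiffHom_subtype hηA {a}) rfl rfl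
    exact RingHom.congr_fun h ⟨a, mem_fgSub dA ηA (Finset.mem_singleton_self a)⟩
  · intro T' hT'
    have hT : T'.T = (extendTaylor That).T := by
      funext A _ dA ηA hηA φ hφ
      ext a
      have h := T'.tm2 _ A (fgDiff hηA {a}) dA (fgAlg dA ηA {a}) ηA (isDiffHom_fgAlg hηA {a})
        hηA (φ.comp (fgSub dA ηA {a}).subtype) φ (fg_comp hφ {a}) hφ
        (fgSub dA ηA {a}).subtype (isDiffHom_subtype hηA {a}) rfl rfl
      rw [hT' _ _ _ _ (isDFG_fgSub hηA {a})] at h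
      exact (RingHom.congr_fun h ⟨a, mem_fgSub dA ηA (Finset.mem_singleton_self a)⟩).symm
    cases T'
    generalize extendTaylor That = R at hT ⊢
    cases R
    cases hT
    rfl
end

section
/- Let K be a differential ring and L a differential K-algebra. Suppose that L admits a restricted K-Taylor morphism T̃. Then L admits a unique K-Taylor morphism T such that for every differential K-algebra A and K-algebra homomorphism φ : A → K, T_φ = T̃_φ. -/
/-!
The forgetful functor from differential `K`-algebras to differential rings has a left adjoint,
`A ↦ K ⊗[ℤ] A` with the derivations `δ ⊗ 1 + 1 ⊗ δ`. This is the coproduct of `K` and `A` both as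
rings (`hom_ext`, `desc_comp_inl`, `desc_comp_inr`) and as differential rings (`isDiffHom_desc`).
A ring homomorphism `φ : A → K` thus extends to the `K`-algebra homomorphism
`φ' = (id, φ) : K ⊗ A → K`, and (TM2), applied to the differential map `A → K ⊗ A`, forces
`T_φ = T̃_φ' ∘ (A → K ⊗ A)`; this gives uniqueness.

Conversely this formula defines a Taylor morphism: (TM1) holds since `φ'` is differential when
`φ` is, and (TM2) since `K ⊗ -` is functorial. If `A` is already a differential `K`-algebra and
`φ` is a `K`-algebra homomorphism, then `φ' = φ ∘ μ` for the differential `K`-algebra homomorphism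
`μ : K ⊗ A → A`, `k ⊗ a ↦ k a`, so `T̃_φ' = T̃_φ ∘ μ`, and `μ` is a retraction of `A → K ⊗ A`;
hence the new morphism extends `T̃`.
-/

universe u

open scoped TensorProduct

namespace DiffCoprod

/-- The first coprojection `k ↦ k ⊗ 1`. -/
def inl (K A : Type u) [CommRing K] [CommRing A] : K →+* K ⊗[ℤ] A :=
  Algebra.TensorProduct.includeLeftRingHom

/-- The second coprojection `a ↦ 1 ⊗ a`. -/
def inr (K A : Type u) [CommRing K] [CommRing A] : A →+* K ⊗[ℤ] A :=
  (Algebra.TensorProduct.includeRight : A →ₐ[ℤ] K ⊗[ℤ] A).toRingHom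

/-- The ring homomorphism `k ⊗ a ↦ f k * g a` given by the universal property of the coproduct. -/
def desc {K A S : Type u} [CommRing K] [CommRing A] [CommRing S]
    (f : K →+* S) (g : A →+* S) : K ⊗[ℤ] A →+* S :=
  (Algebra.TensorProduct.productMap f.toIntAlgHom g.toIntAlgHom).toRingHom

section

variable {K A S : Type u} [CommRing K] [CommRing A] [CommRing S]

lemma desc_tmul (f : K →+* S) (g : A →+* S) (k : K) (a : A) :
    desc f g (k ⊗ₜ[ℤ] a) = f k * g a :=
  Algebra.TensorProduct.productMap_apply_tmul _ _ k a

lemma desc_comp_inl (f : K →+* S) (g : A →+* S) : (desc f g).comp (inl K A) = f := by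
  ext k
  exact (desc_tmul f g k 1).trans (by simp)

lemma desc_comp_inr (f : K →+* S) (g : A →+* S) : (desc f g).comp (inr K A) = g := by
  ext a
  exact (desc_tmul f g 1 a).trans (by simp)

lemma hom_ext {F G : K ⊗[ℤ] A →+* S} (hl : F.comp (inl K A) = G.comp (inl K A))
    (hr : F.comp (inr K A) = G.comp (inr K A)) : F = G := by
  refine RingHom.ext fun x => ?_
  induction x with
  | zero => simp
  | add x y hx hy => rw [map_add, map_add, hx, hy]
  | tmul k a =>
    have h : k ⊗ₜ[ℤ] a = inl K A k * inr K A a := by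
      change _ = (k ⊗ₜ[ℤ] (1 : A)) * ((1 : K) ⊗ₜ[ℤ] a)
      simp
    rw [h, map_mul, map_mul]
    exact congrArg₂ (· * ·) (RingHom.congr_fun hl k) (RingHom.congr_fun hr a)

variable {m : ℕ}

/-- A derivation as an additive, hence `ℤ`-linear, map. -/
def lin (dA : DiffStruct m A) (i : Fin m) : A →ₗ[ℤ] A :=
  (AddMonoidHom.mk' (dA.d i) (dA.d_add i)).toIntLinearMap

/-- The operator `δ_i ⊗ 1 + 1 ⊗ δ_i` on `K ⊗ A`. -/
def tensorD (dK : DiffStruct m K) (dA : DiffStruct m A) (i : Fin m) :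
    K ⊗[ℤ] A →ₗ[ℤ] K ⊗[ℤ] A :=
  TensorProduct.map (lin dK i) LinearMap.id + TensorProduct.map LinearMap.id (lin dA i)

lemma tensorD_tmul (dK : DiffStruct m K) (dA : DiffStruct m A) (i : Fin m) (k : K) (a : A) :
    tensorD dK dA i (k ⊗ₜ a) = dK.d i k ⊗ₜ a + k ⊗ₜ dA.d i a := rfl

lemma d_one (dA : DiffStruct m A) (i : Fin m) : dA.d i 1 = 0 := by
  simpa using dA.d_mul i 1 1

lemma d_zero (dA : DiffStruct m A) (i : Fin m) : dA.d i 0 = 0 := by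
  simpa using dA.d_add i 0 0

/-- The coproduct of two differential rings: the ring `K ⊗[ℤ] A` with the derivations
`δ_i ⊗ 1 + 1 ⊗ δ_i`. -/
def tensor (dK : DiffStruct m K) (dA : DiffStruct m A) : DiffStruct m (K ⊗[ℤ] A) where
  d i := tensorD dK dA i
  d_add i := map_add _
  d_mul i x y := by
    induction x with
    | zero => simp
    | add x x' hx hx' => rw [add_mul, map_add, hx, hx', map_add]; ring
    | tmul k a =>
      induction y with
      | zero => simp
      | add y y' hy hy' => rw [mul_add, map_add, hy, hy', map_add]; ring
      | tmul l b =>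
        simp only [Algebra.TensorProduct.tmul_mul_tmul, tensorD_tmul, dK.d_mul, dA.d_mul,
          TensorProduct.add_tmul, TensorProduct.tmul_add, add_mul, mul_add]
        abel
  d_comm i j x := by
    induction x with
    | zero => simp
    | add x y hx hy => simp only [map_add, hx, hy]
    | tmul k a =>
      simp only [tensorD_tmul, map_add, dK.d_comm i j, dA.d_comm i j]
      abel

lemma isDiffHom_inl (dK : DiffStruct m K) (dA : DiffStruct m A) :
    IsDiffHom dK (tensor dK dA) (inl K A) := by
  intro i k
  change dK.d i k ⊗ₜ[ℤ] (1 : A) = tensorD dK dA i (k ⊗ₜ 1)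
  rw [tensorD_tmul, d_one, TensorProduct.tmul_zero, add_zero]

lemma isDiffHom_inr (dK : DiffStruct m K) (dA : DiffStruct m A) :
    IsDiffHom dA (tensor dK dA) (inr K A) := by
  intro i a
  change (1 : K) ⊗ₜ[ℤ] dA.d i a = tensorD dK dA i (1 ⊗ₜ a)
  rw [tensorD_tmul, d_one, TensorProduct.zero_tmul, zero_add]

lemma isDiffHom_desc {dK : DiffStruct m K} {dA : DiffStruct m A} {dS : DiffStruct m S}
    {f : K →+* S} {g : A →+* S} (hf : IsDiffHom dK dS f) (hg : IsDiffHom dA dS g) :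
    IsDiffHom (tensor dK dA) dS (desc f g) := by
  intro i x
  change desc f g (tensorD dK dA i x) = _
  induction x with
  | zero => simp [d_zero]
  | add x y hx hy => rw [map_add, map_add, hx, hy, map_add, dS.d_add]
  | tmul k a =>
    rw [tensorD_tmul, map_add, desc_tmul, desc_tmul, desc_tmul, hf, hg, dS.d_mul]

lemma isDiffHom_comp {dK : DiffStruct m K} {dA : DiffStruct m A} {dS : DiffStruct m S}
    {g : A →+* S} {f : K →+* A} (hg : IsDiffHom dA dS g) (hf : IsDiffHom dK dA f) :
    IsDiffHom dK dS (g.comp f) := fun i x => by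
  rw [RingHom.comp_apply, hf, hg, RingHom.comp_apply]

end

/-- The Taylor morphism `T_φ = T̃_(id, φ) ∘ inr` obtained from a restricted one. -/
def extend {m : ℕ} {K : Type u} [CommRing K] {dK : DiffStruct m K}
    {L : Type u} [CommRing L] {dL : DiffStruct m L} {ηL : K →+* L}
    (R : RestrictedTaylorMorphism m K dK L dL ηL) : TaylorMorphism m K dK L dL ηL where
  T A _ dA φ := (R.T (K ⊗[ℤ] A) (tensor dK dA) (inl K A) (isDiffHom_inl dK dA)
    (desc (RingHom.id K) φ) (desc_comp_inl _ _)).comp (inr K A)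
  T_diff A _ dA φ := isDiffHom_comp (R.T_diff _ _ _ _ _ _) (isDiffHom_inr dK dA)
  tm1 A _ dA φ hφ := by
    have hid : IsDiffHom dK dK (RingHom.id K) := fun _ _ => rfl
    rw [R.tm1 _ _ _ _ _ _ (isDiffHom_desc hid hφ), RingHom.comp_assoc, desc_comp_inr]
  tm2 A B _ _ dA dB φ ψ χ hχ h := by
    -- `id ⊗ χ : K ⊗ A → K ⊗ B`
    rw [R.tm2 (K ⊗[ℤ] A) (K ⊗[ℤ] B) (tensor dK dA) (tensor dK dB) (inl K A) (inl K B)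
      (isDiffHom_inl dK dA) (isDiffHom_inl dK dB)
      (desc (RingHom.id K) φ) (desc (RingHom.id K) ψ) (desc_comp_inl _ _) (desc_comp_inl _ _)
      (desc (inl K B) ((inr K B).comp χ))
      (isDiffHom_desc (isDiffHom_inl dK dB) (isDiffHom_comp (isDiffHom_inr dK dB) hχ))
      (desc_comp_inl _ _)
      (hom_ext (by simp only [RingHom.comp_assoc, desc_comp_inl])
        (by rw [RingHom.comp_assoc, desc_comp_inr, desc_comp_inr, ← RingHom.comp_assoc,
          desc_comp_inr, h])),
      RingHom.comp_assoc, desc_comp_inr, RingHom.comp_assoc]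

end DiffCoprod

/-- restricted Taylor morphisms extend uniquely to full ones.
Let `K` be a differential ring and `L` a differential `K`-algebra.  If `L` admits a
restricted `K`-Taylor morphism `T̃`, then `L` admits a unique `K`-Taylor morphism `T`
such that for every differential `K`-algebra `A` and `K`-algebra homomorphism
`φ : A → K`, `T_φ = T̃_φ`. -/
theorem restricted_taylor_morphism_extends_uniquely
    {m : ℕ} (K : Type u) [CommRing K] (dK : DiffStruct m K)
    (L : Type u) [CommRing L] (dL : DiffStruct m L) (ηL : K →+* L)
    (hηL : IsDiffHom dK dL ηL)
    (Ttil : RestrictedTaylorMorphism m K dK L dL ηL) :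
    ∃! T : TaylorMorphism m K dK L dL ηL,
      ∀ (A : Type u) [CommRing A] (dA : DiffStruct m A) (ηA : K →+* A)
        (hηA : IsDiffHom dK dA ηA)
        (φ : A →+* K) (hφ : φ.comp ηA = RingHom.id K),
        T.T A dA φ = Ttil.T A dA ηA hηA φ hφ := by
  refine ⟨DiffCoprod.extend Ttil, ?_, ?_⟩
  · intro A _ dA ηA hηA φ hφ
    have hid : IsDiffHom dA dA (RingHom.id A) := fun _ _ => rfl
    change (Ttil.T _ _ _ _ _ _).comp _ = _
    -- the multiplication map `μ : K ⊗ A → A`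
    rw [Ttil.tm2 (K ⊗[ℤ] A) A (DiffCoprod.tensor dK dA) dA (DiffCoprod.inl K A) ηA
      (DiffCoprod.isDiffHom_inl dK dA) hηA (DiffCoprod.desc (RingHom.id K) φ) φ
      (DiffCoprod.desc_comp_inl _ _) hφ (DiffCoprod.desc ηA (RingHom.id A))
      (DiffCoprod.isDiffHom_desc hηA hid) (DiffCoprod.desc_comp_inl _ _)
      (DiffCoprod.hom_ext
        (by rw [RingHom.comp_assoc, DiffCoprod.desc_comp_inl, DiffCoprod.desc_comp_inl, hφ])
        (by rw [RingHom.comp_assoc, DiffCoprod.desc_comp_inr, DiffCoprod.desc_comp_inr,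
          RingHom.comp_id])),
      RingHom.comp_assoc, DiffCoprod.desc_comp_inr, RingHom.comp_id]
  · intro T hT
    have key : T.T = (DiffCoprod.extend Ttil).T := by
      funext A _ dA φ
      change _ = (Ttil.T _ _ _ _ _ _).comp _
      rw [← hT]
      exact T.tm2 _ _ _ _ _ _ _ (DiffCoprod.isDiffHom_inr dK dA)
        (DiffCoprod.desc_comp_inr _ _).symm
    cases T
    cases hE : DiffCoprod.extend Ttil
    rw [hE] at key
    cases key
    rfl
end

section
/- For any differential ring K, there exist a differential K-algebra K* and a K-Taylor morphism T^K for K* such that for any differential K-algebra L admitting a K-Taylor morphism T, there is a unique differential K-algebra homomorphism θ : K* → L such that for every differential ring A and ring homomorphism φ : A → K, T_φ = θ ∘ T^K_φ. -/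
/-!
The forgetful functor from differential rings to rings has a right adjoint: over every ring `K`
there is a cofree differential ring `C` with a ring homomorphism `e : C → K` such that every ring
homomorphism `φ : A → K` from a differential ring has exactly one differential lift `A → C`
through `e` (`exists_cofree`). Take `K* = C`, with the lift of the identity of `K` as structure
map and `T^K_φ` the lift of `φ`; both axioms hold by uniqueness of lifts. If `T` is a Taylor
morphism for `L`, then (TM2) applied to `φ = e ∘ (lift of φ)` shows that `T` is determined by
`θ = T_e : C → L`, and `θ` is forced since the lift of `e` is the identity of `C`.

Instead of the twisted Hurwitz series, whose multiplication involves multinomial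
coefficients, `C` is built as a quotient. The potential jets over `K` are the functions
`Multiset (Fin m) → K`; on the polynomial ring over `ℤ` in all jets, the derivations shift jets
and the evaluation reads off the jet at `0`. Dividing by the largest differential ideal contained
in the kernel of the evaluation (`jetIdeal`) gives a ring in which elements are equal as soon as
all their iterated derivatives have the same value in `K`.
-/

universe u

/-! ### Iterated derivatives and the largest differential ideal in a kernel -/

namespace DiffStruct

variable {m : ℕ} {A B K : Type u} [CommRing A] [CommRing B] [CommRing K]

/-- The iterated derivative along a list of indices, the head of the list acting first. -/
def iter (dA : DiffStruct m A) : List (Fin m) → A → A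
  | [], a => a
  | i :: l, a => dA.iter l (dA.d i a)

/-- Each derivation as an additive homomorphism. -/
def dHom (dA : DiffStruct m A) (i : Fin m) : A →+ A :=
  AddMonoidHom.mk' (dA.d i) (dA.d_add i)

theorem d_zero_s9 (dA : DiffStruct m A) (i : Fin m) : dA.d i 0 = 0 := (dA.dHom i).map_zero

theorem d_sub (dA : DiffStruct m A) (i : Fin m) (a b : A) :
    dA.d i (a - b) = dA.d i a - dA.d i b := (dA.dHom i).map_sub a b

theorem iter_add (dA : DiffStruct m A) (l : List (Fin m)) (a b : A) :
    dA.iter l (a + b) = dA.iter l a + dA.iter l b := by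
  induction l generalizing a b with
  | nil => rfl
  | cons i l ih => simp only [iter, dA.d_add, ih]

theorem iter_zero (dA : DiffStruct m A) (l : List (Fin m)) : dA.iter l 0 = 0 := by
  induction l with
  | nil => rfl
  | cons i l ih => simp only [iter, dA.d_zero_s9, ih]

theorem iter_sub (dA : DiffStruct m A) (l : List (Fin m)) (a b : A) :
    dA.iter l (a - b) = dA.iter l a - dA.iter l b := by
  induction l generalizing a b with
  | nil => rfl
  | cons i l ih => simp only [iter, dA.d_sub, ih]

theorem _root_.IsDiffHom.map_iter {dA : DiffStruct m A} {dB : DiffStruct m B} {χ : A →+* B}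
    (h : IsDiffHom dA dB χ) (l : List (Fin m)) (a : A) :
    χ (dA.iter l a) = dB.iter l (χ a) := by
  induction l generalizing a with
  | nil => rfl
  | cons i l ih => simp only [iter, ih, h i]

/-- The largest differential ideal contained in the kernel of `ε`: the elements all of whose
iterated derivatives are killed by `ε`. -/
def jetIdeal (dA : DiffStruct m A) (ε : A →+* K) : Ideal A where
  carrier := {a | ∀ l, ε (dA.iter l a) = 0}
  zero_mem' l := by rw [iter_zero, map_zero]
  add_mem' ha hb l := by rw [iter_add, map_add, ha l, hb l, add_zero]
  smul_mem' c a ha l := by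
    rw [smul_eq_mul]
    induction l generalizing a c with
    | nil => rw [iter, map_mul, show ε a = 0 from ha [], mul_zero]
    | cons i l ih =>
      rw [iter, dA.d_mul, iter_add, map_add, ih _ a ha,
        ih c (dA.d i a) (fun k => ha (i :: k)), add_zero]

theorem mem_jetIdeal {dA : DiffStruct m A} {ε : A →+* K} {a : A} :
    a ∈ dA.jetIdeal ε ↔ ∀ l, ε (dA.iter l a) = 0 := Iff.rfl

theorem d_mem_jetIdeal {dA : DiffStruct m A} {ε : A →+* K} (i : Fin m) {a : A}
    (ha : a ∈ dA.jetIdeal ε) : dA.d i a ∈ dA.jetIdeal ε :=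
  fun l => ha (i :: l)

/-- The differential structure induced on the quotient by `jetIdeal`. -/
def jetQuotient (dA : DiffStruct m A) (ε : A →+* K) : DiffStruct m (A ⧸ dA.jetIdeal ε) where
  d i := Quotient.lift (fun a => Ideal.Quotient.mk (dA.jetIdeal ε) (dA.d i a)) fun a b h => by
    have h' : a - b ∈ dA.jetIdeal ε := (Submodule.quotientRel_def _).mp h
    rw [Ideal.Quotient.eq, ← d_sub]
    exact d_mem_jetIdeal i h'
  d_add i := by
    rintro ⟨x⟩ ⟨y⟩
    exact congrArg (Ideal.Quotient.mk (dA.jetIdeal ε)) (dA.d_add i x y)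
  d_mul i := by
    rintro ⟨x⟩ ⟨y⟩
    exact congrArg (Ideal.Quotient.mk (dA.jetIdeal ε)) (dA.d_mul i x y)
  d_comm i j := by
    rintro ⟨x⟩
    exact congrArg (Ideal.Quotient.mk (dA.jetIdeal ε)) (dA.d_comm i j x)

theorem isDiffHom_mk (dA : DiffStruct m A) (ε : A →+* K) :
    IsDiffHom dA (dA.jetQuotient ε) (Ideal.Quotient.mk (dA.jetIdeal ε)) :=
  fun _ _ => rfl

/-- The derivatives of a single element, indexed by multisets since the derivations commute. -/
def multiIter (dA : DiffStruct m A) (s : Multiset (Fin m)) (a : A) : A :=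
  haveI : LeftCommutative dA.d := ⟨dA.d_comm⟩
  s.foldr dA.d a

theorem multiIter_zero (dA : DiffStruct m A) (a : A) : dA.multiIter 0 a = a := rfl

theorem multiIter_cons (dA : DiffStruct m A) (i : Fin m) (s : Multiset (Fin m)) (a : A) :
    dA.multiIter (i ::ₘ s) a = dA.multiIter s (dA.d i a) := by
  have : LeftCommutative dA.d := ⟨dA.d_comm⟩
  induction s using Multiset.induction_on with
  | empty => rfl
  | cons j s ih =>
    rw [multiIter, multiIter, Multiset.foldr_cons, Multiset.foldr_cons, Multiset.foldr_cons,
      dA.d_comm]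
    rw [multiIter, multiIter, Multiset.foldr_cons] at ih
    rw [ih]

end DiffStruct

/-! ### The cofree differential ring over a ring -/

section Cofree

variable {m : ℕ} {K : Type u}

open MvPolynomial

/-- A potential jet: a prescribed value in `K` for every iterated derivative of an element. -/
abbrev Jet (m : ℕ) (K : Type u) : Type u := Multiset (Fin m) → K

/-- The jet of the `i`-th derivative of an element with the given jet. -/
def Jet.shift (i : Fin m) (f : Jet m K) : Jet m K := fun s => f (i ::ₘ s)

theorem Jet.shift_comm (i j : Fin m) (f : Jet m K) :
    (f.shift j).shift i = (f.shift i).shift j :=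
  funext fun s => congrArg f (Multiset.cons_swap j i s)

/-- The derivation of the polynomial ring in all jets that shifts each variable. -/
noncomputable def jetDerivation (i : Fin m) :
    Derivation ℤ (MvPolynomial (Jet m K) ℤ) (MvPolynomial (Jet m K) ℤ) :=
  mkDerivation ℤ fun f => X (f.shift i)

variable (m K) in
/-- The polynomial ring in all jets, with derivations shifting the variables. -/
noncomputable def jetPoly : DiffStruct m (MvPolynomial (Jet m K) ℤ) where
  d i := jetDerivation i
  d_add i := map_add _
  d_mul i x y := by
    rw [Derivation.leibniz, smul_eq_mul, smul_eq_mul]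
    ring
  d_comm i j x := by
    have h : ⁅(jetDerivation i : Derivation ℤ (MvPolynomial (Jet m K) ℤ) _),
        (jetDerivation j : Derivation ℤ (MvPolynomial (Jet m K) ℤ) _)⁆ = 0 := by
      refine derivation_ext fun f => ?_
      simp only [Derivation.commutator_apply, jetDerivation, mkDerivation_X,
        Derivation.zero_apply, Jet.shift_comm i j, sub_self]
    rw [← sub_eq_zero, ← Derivation.commutator_apply, h, Derivation.zero_apply]

theorem jetPoly_X (i : Fin m) (f : Jet m K) : (jetPoly m K).d i (X f) = X (f.shift i) :=
  mkDerivation_X ℤ _ _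

variable [CommRing K]

variable (m K) in
/-- Evaluation of polynomials in jets, reading off the value (not the derivatives) of each jet. -/
noncomputable def jetEval : MvPolynomial (Jet m K) ℤ →+* K :=
  eval₂Hom (Int.castRingHom K) fun f => f 0

theorem jetEval_X (f : Jet m K) : jetEval m K (X f) = f 0 := eval₂Hom_X' _ _ _

variable {A : Type u} [CommRing A]

/-- The jet in `K` of an element of a differential ring mapping to `K`. -/
def jetOf (dA : DiffStruct m A) (φ : A →+* K) (a : A) : Jet m K := fun s => φ (dA.multiIter s a)

theorem jetOf_shift (dA : DiffStruct m A) (φ : A →+* K) (a : A) (i : Fin m) :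
    (jetOf dA φ a).shift i = jetOf dA φ (dA.d i a) :=
  funext fun s => congrArg φ (dA.multiIter_cons i s a)

theorem jetPoly_jetOf (dA : DiffStruct m A) (φ : A →+* K) (a : A) (i : Fin m) :
    (jetPoly m K).d i (X (jetOf dA φ a)) = X (jetOf dA φ (dA.d i a)) := by
  rw [jetPoly_X, jetOf_shift]

theorem jetEval_jetOf (dA : DiffStruct m A) (φ : A →+* K) (a : A) :
    jetEval m K (X (jetOf dA φ a)) = φ a := jetEval_X _

theorem jetEval_iter_jetOf (dA : DiffStruct m A) (φ : A →+* K) (l : List (Fin m)) (a : A) :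
    jetEval m K ((jetPoly m K).iter l (X (jetOf dA φ a))) = φ (dA.iter l a) := by
  induction l generalizing a with
  | nil => exact jetEval_jetOf dA φ a
  | cons i l ih => rw [DiffStruct.iter, jetPoly_jetOf, ih, DiffStruct.iter]

/-- The evaluated derivatives of a product of jets of `a` and `b` are those of `a * b`; the
Leibniz rule on both sides makes this an induction without binomial coefficients. -/
theorem jetEval_iter_jetOf_mul (dA : DiffStruct m A) (φ : A →+* K) (l : List (Fin m)) (a b : A) :
    jetEval m K ((jetPoly m K).iter l (X (jetOf dA φ a) * X (jetOf dA φ b))) =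
      φ (dA.iter l (a * b)) := by
  induction l generalizing a b with
  | nil => simp only [DiffStruct.iter, map_mul, jetEval_jetOf]
  | cons i l ih =>
    simp only [DiffStruct.iter, DiffStruct.d_mul, jetPoly_jetOf, DiffStruct.iter_add, map_add, ih]

variable (m K) in
/-- The ideal of relations between jets, defining the cofree differential ring over `K`. -/
noncomputable abbrev jetRel : Ideal (MvPolynomial (Jet m K) ℤ) :=
  (jetPoly m K).jetIdeal (jetEval m K)

theorem mk_jetRel_eq {p q : MvPolynomial (Jet m K) ℤ}
    (h : ∀ l, jetEval m K ((jetPoly m K).iter l p) = jetEval m K ((jetPoly m K).iter l q)) :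
    Ideal.Quotient.mk (jetRel m K) p = Ideal.Quotient.mk (jetRel m K) q := by
  rw [Ideal.Quotient.eq, DiffStruct.mem_jetIdeal]
  intro l
  rw [DiffStruct.iter_sub, map_sub, h l, sub_self]

/-- The differential lift of `φ : A → K` to the cofree differential ring: each element goes to
the class of its jet. -/
noncomputable def jetLift (dA : DiffStruct m A) (φ : A →+* K) :
    A →+* MvPolynomial (Jet m K) ℤ ⧸ jetRel m K :=
  RingHom.mk'
    { toFun := fun a => Ideal.Quotient.mk (jetRel m K) (X (jetOf dA φ a))
      map_one' := by
        rw [← map_one (Ideal.Quotient.mk (jetRel m K))]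
        refine mk_jetRel_eq fun l => ?_
        rw [jetEval_iter_jetOf]
        cases l with
        | nil => simp only [DiffStruct.iter, map_one]
        | cons i l =>
          -- a derivation kills `1`, by Leibniz applied to `1 * 1`
          have h : ∀ {B : Type u} [CommRing B] (dB : DiffStruct m B), dB.d i 1 = 0 := by
            intro B _ dB
            have h1 := dB.d_mul i 1 1
            rw [mul_one, mul_one, one_mul] at h1
            exact left_eq_add.mp h1
          simp only [DiffStruct.iter, h, DiffStruct.iter_zero, map_zero]
      map_mul' := fun a b => by
        rw [← map_mul (Ideal.Quotient.mk (jetRel m K))]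
        refine mk_jetRel_eq fun l => ?_
        rw [jetEval_iter_jetOf, jetEval_iter_jetOf_mul] }
    fun a b => by
      change Ideal.Quotient.mk (jetRel m K) _ =
        Ideal.Quotient.mk (jetRel m K) _ + Ideal.Quotient.mk (jetRel m K) _
      rw [← map_add (Ideal.Quotient.mk (jetRel m K))]
      refine mk_jetRel_eq fun l => ?_
      simp only [DiffStruct.iter_add, map_add, jetEval_iter_jetOf]

theorem jetLift_apply (dA : DiffStruct m A) (φ : A →+* K) (a : A) :
    jetLift dA φ a = Ideal.Quotient.mk (jetRel m K) (X (jetOf dA φ a)) := rfl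

variable (m K) in
/-- Existence of the cofree differential ring over a ring `K`. -/
theorem exists_cofree :
    ∃ (C : Type u) (_ : CommRing C) (dC : DiffStruct m C) (e : C →+* K),
      ∀ (A : Type u) [CommRing A] (dA : DiffStruct m A) (φ : A →+* K),
        ∃! χ : A →+* C, IsDiffHom dA dC χ ∧ e.comp χ = φ := by
  let dC := (jetPoly m K).jetQuotient (jetEval m K)
  let e : MvPolynomial (Jet m K) ℤ ⧸ jetRel m K →+* K :=
    Ideal.Quotient.lift (jetRel m K) (jetEval m K) fun a ha => ha []
  have he : ∀ p, e (Ideal.Quotient.mk (jetRel m K) p) = jetEval m K p := fun _ => rfl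
  have hmk : IsDiffHom (jetPoly m K) dC (Ideal.Quotient.mk (jetRel m K)) :=
    DiffStruct.isDiffHom_mk _ _
  refine ⟨_, _, dC, e, fun A _ dA φ => ⟨jetLift dA φ, ⟨fun i a => ?_, ?_⟩, ?_⟩⟩
  · rw [jetLift_apply, jetLift_apply, ← hmk, jetPoly_jetOf]
  · ext a
    rw [RingHom.comp_apply, jetLift_apply, he, jetEval_jetOf]
  · rintro χ ⟨hχ, hφ⟩
    ext a
    obtain ⟨p, hp⟩ := Ideal.Quotient.mk_surjective (χ a)
    rw [← hp, jetLift_apply]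
    refine mk_jetRel_eq fun l => ?_
    rw [jetEval_iter_jetOf, ← hφ, RingHom.comp_apply, hχ.map_iter, ← hp, ← hmk.map_iter, he]

end Cofree

/-! ### The universal Taylor morphism -/

theorem IsDiffHom.comp {m : ℕ} {A B C : Type u} [CommRing A] [CommRing B] [CommRing C]
    {dA : DiffStruct m A} {dB : DiffStruct m B} {dC : DiffStruct m C} {g : B →+* C} {f : A →+* B}
    (hg : IsDiffHom dB dC g) (hf : IsDiffHom dA dB f) : IsDiffHom dA dC (g.comp f) := by
  intro i x
  rw [RingHom.comp_apply, hf, hg, RingHom.comp_apply]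

/-- existence of the universal `K`-Taylor morphism.
For any differential ring `K`, there are a differential `K`-algebra `K*` and a
`K`-Taylor morphism `T^K` for `K*` such that every `K`-Taylor morphism `T` for a
differential `K`-algebra `L` factors through `T^K` via a unique differential
`K`-algebra homomorphism `θ : K* → L`. -/
theorem universal_taylor_morphism_exists
    {m : ℕ} (K : Type u) [CommRing K] (dK : DiffStruct m K) :
    ∃ (Kstar : Type u) (_ : CommRing Kstar) (dKs : DiffStruct m Kstar)
      (ηKs : K →+* Kstar) (_ : IsDiffHom dK dKs ηKs)
      (TK : TaylorMorphism m K dK Kstar dKs ηKs),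
      ∀ (L : Type u) [CommRing L] (dL : DiffStruct m L) (ηL : K →+* L),
        IsDiffHom dK dL ηL →
        ∀ T : TaylorMorphism m K dK L dL ηL,
        ∃! θ : Kstar →+* L,
          IsDiffHom dKs dL θ ∧ θ.comp ηKs = ηL ∧
          ∀ (A : Type u) [CommRing A] (dA : DiffStruct m A) (φ : A →+* K),
            T.T A dA φ = θ.comp (TK.T A dA φ) := by
  obtain ⟨C, _, dC, e, h⟩ := exists_cofree m K
  choose lift hlift huniq using fun (A : Type u) (iA : CommRing A) => h A
  have hdiff : ∀ (A : Type u) [iA : CommRing A] (dA : DiffStruct m A) (φ : A →+* K),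
      IsDiffHom dA dC (lift A iA dA φ) := fun A iA dA φ => (hlift A iA dA φ).1
  have hev : ∀ (A : Type u) [iA : CommRing A] (dA : DiffStruct m A) (φ : A →+* K),
      e.comp (lift A iA dA φ) = φ := fun A iA dA φ => (hlift A iA dA φ).2
  have hid : ∀ (A : Type u) [CommRing A] (dA : DiffStruct m A),
      IsDiffHom dA dA (RingHom.id A) := fun _ _ _ _ _ => rfl
  let TK : TaylorMorphism m K dK C dC (lift K _ dK (RingHom.id K)) :=
    { T := fun A iA dA φ => lift A iA dA φ
      T_diff := fun A _ dA φ => hdiff A dA φ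
      tm1 := fun A _ dA φ hφ => by
        refine (huniq _ _ _ _ _ ⟨(hdiff K dK _).comp hφ, ?_⟩).symm
        rw [← RingHom.comp_assoc, hev, RingHom.id_comp]
      tm2 := fun A B _ _ dA dB φ ψ χ hχ hφ => by
        refine (huniq _ _ _ _ _ ⟨(hdiff B dB ψ).comp hχ, ?_⟩).symm
        rw [← RingHom.comp_assoc, hev, hφ] }
  refine ⟨C, _, dC, lift K _ dK (RingHom.id K), hdiff K dK _, TK, ?_⟩
  intro L _ dL ηL _ T
  have key : ∀ (A : Type u) [iA : CommRing A] (dA : DiffStruct m A) (φ : A →+* K),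
      T.T A dA φ = (T.T C dC e).comp (lift A iA dA φ) := fun A _ dA φ =>
    T.tm2 A C dA dC φ e _ (hdiff A dA φ) (hev A dA φ).symm
  refine ⟨T.T C dC e, ⟨T.T_diff C dC e, ?_, key⟩, ?_⟩
  · rw [← key, T.tm1 K dK _ (hid K dK), RingHom.comp_id]
  · rintro θ ⟨-, -, hθ⟩
    -- the lift of `e` is the identity of `C`
    have he : RingHom.id C = lift C _ dC e :=
      huniq _ _ _ _ _ ⟨hid C dC, RingHom.comp_id e⟩
    calc θ = θ.comp (RingHom.id C) := (RingHom.comp_id θ).symm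
      _ = θ.comp (lift C _ dC e) := by rw [← he]
      _ = T.T C dC e := (hθ C dC e).symm
end

section
/- Let K be a differential ring, and let T and S be K-Taylor morphisms for differential K-algebras L and F, respectively. Suppose T admits an evaluation map ev : L → K. Then S_ev : L → F satisfies S_φ = S_ev ∘ T_φ for every differential ring A and ring homomorphism φ : A → K. Moreover, if θ : L → F is any K-algebra homomorphism satisfying S_φ = θ ∘ T_φ for every such (A, φ), then θ = S_ev. -/
universe u

/-- An evaluation map for a `K`-Taylor morphism `T` for `L`: a `K`-algebra
homomorphism `ev : L → K` satisfying (EV1) `ev ∘ T_φ = φ` for all `(A, φ)` and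
(EV2) `T_ev = id_L`. -/
def IsEvalMap {m : ℕ} {K L : Type u} [CommRing K] [CommRing L]
    {dK : DiffStruct m K} {dL : DiffStruct m L} {ηL : K →+* L}
    (T : TaylorMorphism m K dK L dL ηL) (ev : L →+* K) : Prop :=
  ev.comp ηL = RingHom.id K ∧
  (∀ (A : Type u) [CommRing A] (dA : DiffStruct m A) (φ : A →+* K),
    ev.comp (T.T A dA φ) = φ) ∧
  T.T L dL ev = RingHom.id L

/-- morphisms out of a Taylor morphism with an evaluation map.
If `T` (for `L`) admits an evaluation map `ev`, then `S_ev : L → F` satisfies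
`S_φ = S_ev ∘ T_φ` for all `(A, φ)`, and it is the unique `K`-algebra homomorphism
`θ : L → F` with this property. -/
theorem morphism_of_taylor_morphisms_via_eval
    {m : ℕ} (K : Type u) [CommRing K] (dK : DiffStruct m K)
    (L : Type u) [CommRing L] (dL : DiffStruct m L) (ηL : K →+* L)
    (hηL : IsDiffHom dK dL ηL)
    (F : Type u) [CommRing F] (dF : DiffStruct m F) (ηF : K →+* F)
    (hηF : IsDiffHom dK dF ηF)
    (T : TaylorMorphism m K dK L dL ηL)
    (S : TaylorMorphism m K dK F dF ηF)
    (ev : L →+* K) (hev : IsEvalMap T ev) :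
    (∀ (A : Type u) [CommRing A] (dA : DiffStruct m A) (φ : A →+* K),
      S.T A dA φ = (S.T L dL ev).comp (T.T A dA φ)) ∧
    (∀ θ : L →+* F, θ.comp ηL = ηF →
      (∀ (A : Type u) [CommRing A] (dA : DiffStruct m A) (φ : A →+* K),
        S.T A dA φ = θ.comp (T.T A dA φ)) →
      θ = S.T L dL ev) := by
  obtain ⟨-, hev1, hev2⟩ := hev
  refine ⟨fun A _ dA φ => ?_, fun θ _ hθ => ?_⟩
  -- (TM2) for `S`, along the differential homomorphism `T_φ` and `φ = ev ∘ T_φ` (EV1).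
  · exact S.tm2 A L dA dL φ ev (T.T A dA φ) (T.T_diff A dA φ) (hev1 A dA φ).symm
  -- The hypothesis on `θ` at `φ = ev`, where `T_ev = id_L` (EV2).
  · rw [hθ L dL ev, hev2, RingHom.comp_id]
end

section
/- Let K be a differential ring, L a differential K-algebra, and T a K-Taylor morphism for L admitting an evaluation map ev : L → K. Then for every differential ring A, the map φ ↦ T_φ is a bijection from the set of ring homomorphisms A → K to the set of differential ring homomorphisms A → L, with inverse given by ψ ↦ ev ∘ ψ. -/
/-!
Condition (EV1) says directly that `ψ ↦ ev ∘ ψ` is a left inverse of `φ ↦ T_φ`. For the other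
composite, a differential `ψ : A → L` factors `ev ∘ ψ` through the pair `(L, ev)`, so naturality
(TM2) gives `T_{ev ∘ ψ} = T_ev ∘ ψ`, which is `ψ` by (EV2).
-/

universe u

/-- the Taylor morphism is a bijection with inverse given by
composition with the evaluation map.  If `T` admits an evaluation map `ev`, then for
every differential ring `A` the map `φ ↦ T_φ` is a bijection from ring homomorphisms
`A → K` to differential ring homomorphisms `A → L`, with inverse `ψ ↦ ev ∘ ψ`. -/
theorem taylor_morphism_bijective_with_eval_inverse
    {m : ℕ} (K : Type u) [CommRing K] (dK : DiffStruct m K)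
    (L : Type u) [CommRing L] (dL : DiffStruct m L) (ηL : K →+* L)
    (hηL : IsDiffHom dK dL ηL)
    (T : TaylorMorphism m K dK L dL ηL)
    (ev : L →+* K) (hev : IsEvalMap T ev) :
    ∀ (A : Type u) [CommRing A] (dA : DiffStruct m A),
      Function.Bijective
        (fun φ : A →+* K =>
          (⟨T.T A dA φ, T.T_diff A dA φ⟩ : {ψ : A →+* L // IsDiffHom dA dL ψ})) ∧
      (∀ φ : A →+* K, ev.comp (T.T A dA φ) = φ) ∧
      (∀ ψ : {ψ : A →+* L // IsDiffHom dA dL ψ}, T.T A dA (ev.comp ψ.1) = ψ.1) := by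
  obtain ⟨-, ev1, ev2⟩ := hev
  intro A _ dA
  have right : ∀ ψ : {ψ : A →+* L // IsDiffHom dA dL ψ},
      T.T A dA (ev.comp ψ.1) = ψ.1 := fun ψ => by
    rw [T.tm2 A L dA dL (ev.comp ψ.1) ev ψ.1 ψ.2 rfl, ev2, RingHom.id_comp]
  refine ⟨Function.bijective_iff_has_inverse.mpr ⟨fun ψ => ev.comp ψ.1, ?_, ?_⟩, ev1 A dA, right⟩
  · exact fun φ => ev1 A dA φ
  · exact fun ψ => Subtype.ext (right ψ)
end

section
/- Let K and L be differential rings, let T^K be a K-Taylor morphism for a differential K-algebra K* admitting an evaluation map ev_K : K* → K, and let T^L be an L-Taylor morphism for a differential L-algebra L*. Let θ : K → L be a ring homomorphism. Then there exists a unique differential ring homomorphism θ* : K* → L* such that for every differential ring A and ring homomorphism φ : A → K, T^L_{θ∘φ} = θ* ∘ T^K_φ; moreover θ* = T^L_{θ ∘ ev_K}. -/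
/-!
By (EV1), `θ ∘ φ = (θ ∘ ev_K) ∘ T^K_φ`, and `T^K_φ` is differential, so (TM2) for `T^L` shows that
`T^L_{θ ∘ ev_K}` has the required property. Uniqueness is the case `φ = ev_K` of that property:
`T^K_{ev_K}` is the identity by (EV2), so it determines `θ*`.
-/

universe u

/-- functoriality of the universal Taylor morphism.
Let `T^K` be a `K`-Taylor morphism for `K*` admitting an evaluation map `ev_K`, let
`T^L` be an `L`-Taylor morphism for `L*`, and let `θ : K → L` be a ring homomorphism.
Then there is a unique differential ring homomorphism `θ* : K* → L*` with
`T^L_{θ∘φ} = θ* ∘ T^K_φ` for all `(A, φ)`; moreover `θ* = T^L_{θ ∘ ev_K}`. -/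
theorem taylor_morphism_functorial
    {m : ℕ} (K : Type u) [CommRing K] (dK : DiffStruct m K)
    (L : Type u) [CommRing L] (dL : DiffStruct m L)
    (Kstar : Type u) [CommRing Kstar] (dKs : DiffStruct m Kstar)
    (ηKs : K →+* Kstar) (hηKs : IsDiffHom dK dKs ηKs)
    (Lstar : Type u) [CommRing Lstar] (dLs : DiffStruct m Lstar)
    (ηLs : L →+* Lstar) (hηLs : IsDiffHom dL dLs ηLs)
    (TK : TaylorMorphism m K dK Kstar dKs ηKs)
    (TL : TaylorMorphism m L dL Lstar dLs ηLs)
    (evK : Kstar →+* K) (hevK : IsEvalMap TK evK)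
    (θ : K →+* L) :
    (∃! θs : Kstar →+* Lstar,
      IsDiffHom dKs dLs θs ∧
      ∀ (A : Type u) [CommRing A] (dA : DiffStruct m A) (φ : A →+* K),
        TL.T A dA (θ.comp φ) = θs.comp (TK.T A dA φ)) ∧
    (IsDiffHom dKs dLs (TL.T Kstar dKs (θ.comp evK)) ∧
      ∀ (A : Type u) [CommRing A] (dA : DiffStruct m A) (φ : A →+* K),
        TL.T A dA (θ.comp φ) = (TL.T Kstar dKs (θ.comp evK)).comp (TK.T A dA φ)) := by
  obtain ⟨-, hev, hid⟩ := hevK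
  have hfac : ∀ (A : Type u) [CommRing A] (dA : DiffStruct m A) (φ : A →+* K),
      TL.T A dA (θ.comp φ) = (TL.T Kstar dKs (θ.comp evK)).comp (TK.T A dA φ) := by
    intro A _ dA φ
    -- (TM2) for `χ = T^K_φ`; its triangle commutes by (EV1)
    refine TL.tm2 A Kstar dA dKs _ _ _ (TK.T_diff A dA φ) ?_
    rw [RingHom.comp_assoc, hev A dA φ]
  have hdiff := TL.T_diff Kstar dKs (θ.comp evK)
  refine ⟨⟨_, ⟨hdiff, hfac⟩, ?_⟩, hdiff, hfac⟩
  rintro θs ⟨-, hθs⟩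
  -- evaluate the defining identity at `φ = ev_K`
  rw [hθs Kstar dKs evK, hid, RingHom.comp_id]
end
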